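/- arXiv:1507.02670 — 2 statements merged into one kernel-verified Lean document; each statement's English description precedes it below -/
import Mathlib

section
/- For the Reshetnyak energy I²₊(s) = max_{v∈S¹} s(v)², the induced Jacobian J(s) = inf{I²₊(s∘T) : T ∈ SL(2,ℝ)} equals the inscribed Riemannian Jacobian: J(s) = π / |L| for every norm s, where |L| is the Lebesgue area of the largest-area ellipse contained in the unit ball of s. In particular J(s₀) = 1 for the Euclidean norm s₀. -/
open Matrix MeasureTheory Real

noncomputable section

/-- The Euclidean plane. -/
abbrev E2 := EuclideanSpace ℝ (Fin 2)

/-- `SL(2,ℝ)` as matrices of determinant one. -/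
abbrev SL2 := Matrix.SpecialLinearGroup (Fin 2) ℝ

/-- The seminorm `v ↦ s (M v)`, i.e. `s ∘ M`. -/
def compM (s : Seminorm ℝ E2) (M : Matrix (Fin 2) (Fin 2) ℝ) : Seminorm ℝ E2 :=
  s.comp (Matrix.toEuclideanLin M)

/-- A seminorm is a norm iff it is positive away from the origin. -/
def IsNorm (s : Seminorm ℝ E2) : Prop := ∀ v : E2, v ≠ 0 → 0 < s v

/-- Monotonicity of a functional on seminorms. -/
def Monot (J : Seminorm ℝ E2 → ℝ) : Prop := ∀ s s' : Seminorm ℝ E2, s' ≤ s → J s' ≤ J s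

/-- Degree 2 homogeneity of a functional on seminorms. -/
def Homog (J : Seminorm ℝ E2 → ℝ) : Prop :=
  ∀ (c : NNReal) (s : Seminorm ℝ E2), J (c • s) = (c : ℝ) ^ 2 * J s

/-- `SL₂`-invariance of a functional on seminorms. -/
def SL2inv (J : Seminorm ℝ E2 → ℝ) : Prop :=
  ∀ (s : Seminorm ℝ E2) (T : SL2), J (compM s (T : Matrix (Fin 2) (Fin 2) ℝ)) = J s

/-- The Reshetnyak energy `I²₊(s) = max_{v ∈ S¹} s(v)²`. -/
def Iplus (s : Seminorm ℝ E2) : ℝ := ⨆ v : Metric.sphere (0 : E2) 1, (s (v : E2)) ^ 2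

/-- The unit ball of a seminorm. -/
def unitBallS (s : Seminorm ℝ E2) : Set E2 := {v | s v ≤ 1}

/-- The ellipse `M(D̄)` is inscribed in the unit ball of `s`. -/
def ellipseIn (s : Seminorm ℝ E2) (M : Matrix (Fin 2) (Fin 2) ℝ) : Prop :=
  (Matrix.toEuclideanLin M) '' (Metric.closedBall 0 1) ⊆ unitBallS s

/-- The area of the largest ellipse inscribed in the unit ball of `s`
(the area of the Loewner ellipse); the ellipse `M(D̄)` has area `π |det M|`. -/
def LoewnerArea (s : Seminorm ℝ E2) : ℝ :=
  sSup {a : ℝ | ∃ M : Matrix (Fin 2) (Fin 2) ℝ, ellipseIn s M ∧ a = π * |M.det|}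

/-- The inscribed Riemannian (Ivanov) Jacobian `J^i(s) = π / |L|`. -/
def Ji (s : Seminorm ℝ E2) : ℝ := π / LoewnerArea s

/-- `s` is isotropic: some round disc `t·D̄` is inscribed in the unit ball of `s` and has at
least the area of every inscribed ellipse, i.e. the Loewner ellipse is a round disc. -/
def Isotropic (s : Seminorm ℝ E2) : Prop :=
  ∃ t : ℝ, 0 < t ∧ Metric.closedBall (0 : E2) t ⊆ unitBallS s ∧
    ∀ M : Matrix (Fin 2) (Fin 2) ℝ, ellipseIn s M → π * |M.det| ≤ π * t ^ 2

/-- A Jacobian (definition of area): monotone, degree-2 homogeneous, `SL₂`-invariant,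
normalized on the Euclidean norm. -/
def IsJacobian (J : Seminorm ℝ E2 → ℝ) : Prop :=
  (∀ s, 0 ≤ J s) ∧ Monot J ∧ Homog J ∧ SL2inv J ∧ J (normSeminorm ℝ E2) = 1

/-- `Ĵ(s) = inf {I(s ∘ T) : T ∈ SL(2,ℝ)}`. -/
def Jhat (I : Seminorm ℝ E2 → ℝ) (s : Seminorm ℝ E2) : ℝ :=
  ⨅ T : SL2, I (compM s (T : Matrix (Fin 2) (Fin 2) ℝ))

theorem seminorm_bddAbove_sphere (s : Seminorm ℝ E2) :
    BddAbove (Set.range fun v : Metric.sphere (0 : E2) 1 => (s (v : E2)) ^ 2) := by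
  have hs : Continuous s := by
    refine Seminorm.continuous_of_continuousAt_zero ?_
    have := (s.convexOn.continuousOn isOpen_univ)
    exact (this.continuousAt Filter.univ_mem)
  have : CompactSpace (Metric.sphere (0 : E2) 1) :=
    isCompact_iff_compactSpace.mp (isCompact_sphere 0 1)
  exact (isCompact_range (by fun_prop)).bddAbove

theorem sq_le_Iplus (s : Seminorm ℝ E2) {v : E2} (hv : ‖v‖ = 1) : s v ^ 2 ≤ Iplus s :=
  le_ciSup (seminorm_bddAbove_sphere s) ⟨v, by simpa using hv⟩

theorem Iplus_nonneg (s : Seminorm ℝ E2) : 0 ≤ Iplus s :=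
  Real.iSup_nonneg fun _ => sq_nonneg _

theorem sq_le_Iplus_mul (s : Seminorm ℝ E2) (v : E2) : s v ^ 2 ≤ Iplus s * ‖v‖ ^ 2 := by
  by_cases hv : v = 0
  · simp [hv]
  have hn : 0 < ‖v‖ := norm_pos_iff.mpr hv
  have h := sq_le_Iplus s (v := ‖v‖⁻¹ • v) (by simp [norm_smul, hn.ne'])
  rw [map_smul_eq_mul, norm_inv, norm_norm, mul_pow, inv_pow, inv_mul_le_iff₀ (by positivity)] at h
  linarith

theorem Iplus_le (s : Seminorm ℝ E2) {K : ℝ} (h : ∀ v : E2, ‖v‖ = 1 → s v ^ 2 ≤ K) :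
    Iplus s ≤ K := by
  have : Nonempty (Metric.sphere (0 : E2) 1) :=
    (NormedSpace.sphere_nonempty.mpr zero_le_one).to_subtype
  exact ciSup_le fun v => h v (by simp)

theorem compM_apply (s : Seminorm ℝ E2) (M : Matrix (Fin 2) (Fin 2) ℝ) (v : E2) :
    compM s M v = s (Matrix.toEuclideanLin M v) := rfl

theorem Iplus_compM_pos {s : Seminorm ℝ E2} (hs : IsNorm s) (T : SL2) :
    0 < Iplus (compM s (T : Matrix (Fin 2) (Fin 2) ℝ)) := by
  let e : E2 := EuclideanSpace.single 0 1
  have he : ‖e‖ = 1 := by simp [e]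
  refine lt_of_lt_of_le ?_ (sq_le_Iplus _ he)
  rw [compM_apply]
  refine pow_pos (hs _ fun h => ?_) 2
  have h2 : (T : Matrix (Fin 2) (Fin 2) ℝ) *ᵥ e.ofLp = 0 := congrArg WithLp.ofLp h
  have h3 : e.ofLp = 0 := Matrix.eq_zero_of_mulVec_eq_zero (by simp [T.det_coe]) h2
  have h4 := congrFun h3 0
  simp [e] at h4

theorem exists_ellipseIn_of_SL2 {s : Seminorm ℝ E2} (T : SL2)
    (hR : 0 < Iplus (compM s (T : Matrix (Fin 2) (Fin 2) ℝ))) :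
    ∃ M : Matrix (Fin 2) (Fin 2) ℝ, ellipseIn s M ∧
      |M.det| = (Iplus (compM s (T : Matrix (Fin 2) (Fin 2) ℝ)))⁻¹ := by
  set R := Iplus (compM s (T : Matrix (Fin 2) (Fin 2) ℝ)) with hRdef
  have hq : 0 < √R := Real.sqrt_pos.mpr hR
  refine ⟨(√R)⁻¹ • (T : Matrix (Fin 2) (Fin 2) ℝ), ?_, ?_⟩
  · rintro _ ⟨v, hv, rfl⟩
    have hv1 : ‖v‖ ≤ 1 := by simpa using hv
    have h := sq_le_Iplus_mul (compM s (T : Matrix (Fin 2) (Fin 2) ℝ)) v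
    rw [← hRdef, compM_apply] at h
    have h2 : s (Matrix.toEuclideanLin (T : Matrix (Fin 2) (Fin 2) ℝ) v) ≤ √R := by
      refine Real.le_sqrt_of_sq_le (h.trans ?_)
      exact mul_le_of_le_one_right hR.le (pow_le_one₀ (norm_nonneg v) hv1)
    change s _ ≤ 1
    rw [map_smul, LinearMap.smul_apply, map_smul_eq_mul, Real.norm_of_nonneg (by positivity),
      inv_mul_le_iff₀ hq]
    simpa using h2
  · rw [Matrix.det_smul, T.det_coe]
    simp [inv_pow, Real.sq_sqrt hR.le, abs_of_pos hR]

theorem exists_SL2_of_ellipseIn {s : Seminorm ℝ E2} {M : Matrix (Fin 2) (Fin 2) ℝ}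
    (hM : ellipseIn s M) (hd : M.det ≠ 0) :
    ∃ T : SL2, Iplus (compM s (T : Matrix (Fin 2) (Fin 2) ℝ)) ≤ |M.det|⁻¹ := by
  have ha : 0 < |M.det| := abs_pos.mpr hd
  have hq : 0 < √|M.det| := Real.sqrt_pos.mpr ha
  have hq2 : √|M.det| ^ 2 = |M.det| := Real.sq_sqrt ha.le
  obtain ⟨σ, hσ, hσd⟩ : ∃ σ : ℝ, σ ^ 2 = 1 ∧ M.det * σ = |M.det| := by
    rcases abs_choice M.det with h | h
    · exact ⟨1, by norm_num, by rw [h]; ring⟩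
    · exact ⟨-1, by norm_num, by rw [h]; ring⟩
  let D : Matrix (Fin 2) (Fin 2) ℝ := Matrix.diagonal ![1, σ]
  refine ⟨⟨(√|M.det|)⁻¹ • (M * D), ?_⟩, Iplus_le _ fun v hv => ?_⟩
  · rw [Matrix.det_smul, Matrix.det_mul]
    simp only [D, Matrix.det_diagonal, Fin.prod_univ_two, Fintype.card_fin, inv_pow, hq2]
    simp [hσd, ha.ne']
  · have hw : ‖Matrix.toEuclideanLin D v‖ ≤ 1 := by
      rw [EuclideanSpace.norm_eq] at hv ⊢
      rw [← hv]
      refine Real.sqrt_le_sqrt (le_of_eq ?_)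
      simp [D, Fin.sum_univ_two, Matrix.mulVec_diagonal, mul_pow, hσ]
    have h1 : s (Matrix.toEuclideanLin M (Matrix.toEuclideanLin D v)) ≤ 1 :=
      hM ⟨_, by simpa using hw, rfl⟩
    have h2 : Matrix.toEuclideanLin ((√|M.det|)⁻¹ • (M * D)) v =
        (√|M.det|)⁻¹ • Matrix.toEuclideanLin M (Matrix.toEuclideanLin D v) := by
      ext i
      simp
    change s (Matrix.toEuclideanLin ((√|M.det|)⁻¹ • (M * D)) v) ^ 2 ≤ _
    rw [h2, map_smul_eq_mul, mul_pow, Real.norm_of_nonneg (by positivity), inv_pow, hq2]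
    exact mul_le_of_le_one_right (by positivity) (pow_le_one₀ (apply_nonneg _ _) h1)

theorem Jhat_Iplus_le (s : Seminorm ℝ E2) (T : SL2) :
    Jhat Iplus s ≤ Iplus (compM s (T : Matrix (Fin 2) (Fin 2) ℝ)) :=
  ciInf_le ⟨0, by rintro _ ⟨T, rfl⟩; exact Iplus_nonneg _⟩ T

theorem Jhat_Iplus_mul_det_le {s : Seminorm ℝ E2} {M : Matrix (Fin 2) (Fin 2) ℝ}
    (hM : ellipseIn s M) : Jhat Iplus s * |M.det| ≤ 1 := by
  by_cases hd : M.det = 0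
  · simp [hd]
  obtain ⟨T, hT⟩ := exists_SL2_of_ellipseIn hM hd
  rw [← le_div_iff₀ (abs_pos.mpr hd), one_div]
  exact (Jhat_Iplus_le s T).trans hT

theorem Jhat_Iplus_eq_div_LoewnerArea {s : Seminorm ℝ E2} (hs : IsNorm s) :
    Jhat Iplus s = π / LoewnerArea s := by
  have hle : 0 < Jhat Iplus s → ∀ a ∈ {a : ℝ | ∃ M : Matrix (Fin 2) (Fin 2) ℝ,
      ellipseIn s M ∧ a = π * |M.det|}, a ≤ π / Jhat Iplus s := by
    rintro hJ _ ⟨M, hM, rfl⟩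
    rw [le_div_iff₀ hJ]
    nlinarith [Jhat_Iplus_mul_det_le hM, Real.pi_pos]
  by_cases hb : BddAbove {a : ℝ | ∃ M : Matrix (Fin 2) (Fin 2) ℝ,
      ellipseIn s M ∧ a = π * |M.det|}
  · have hL : ∀ T : SL2, π / Iplus (compM s (T : Matrix (Fin 2) (Fin 2) ℝ)) ≤ LoewnerArea s := by
      intro T
      obtain ⟨M, hM, hd⟩ := exists_ellipseIn_of_SL2 T (Iplus_compM_pos hs T)
      exact le_csSup hb ⟨M, hM, by rw [hd, div_eq_mul_inv]⟩
    have hL0 : 0 < LoewnerArea s :=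
      (div_pos Real.pi_pos (Iplus_compM_pos hs 1)).trans_le (hL 1)
    have hge : π / LoewnerArea s ≤ Jhat Iplus s := le_ciInf fun T =>
      (div_le_comm₀ (Iplus_compM_pos hs T) hL0).mp (hL T)
    have hJ : 0 < Jhat Iplus s := (div_pos Real.pi_pos hL0).trans_le hge
    refine le_antisymm ((le_div_comm₀ hL0 hJ).mp ?_) hge
    refine csSup_le ⟨0, 0, ?_, by simp⟩ (hle hJ)
    rintro _ ⟨v, -, rfl⟩
    simp [unitBallS]
  · have hL : LoewnerArea s = 0 := Real.sSup_of_not_bddAbove hb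
    rw [hL, div_zero]
    refine le_antisymm (not_lt.mp fun hJ => hb ⟨_, hle hJ⟩) (Real.iInf_nonneg fun T => Iplus_nonneg _)

theorem one_le_Iplus_compM_norm (T : SL2) :
    1 ≤ Iplus (compM (normSeminorm ℝ E2) (T : Matrix (Fin 2) (Fin 2) ℝ)) := by
  have h : ∀ i, T.1 0 i ^ 2 + T.1 1 i ^ 2 ≤
      Iplus (compM (normSeminorm ℝ E2) (T : Matrix (Fin 2) (Fin 2) ℝ)) := by
    intro i
    refine le_of_eq_of_le ?_ (sq_le_Iplus _ (v := EuclideanSpace.single i 1) (by simp))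
    rw [compM_apply, coe_normSeminorm, EuclideanSpace.norm_sq_eq]
    simp [Fin.sum_univ_two]
  have hd : T.1 0 0 * T.1 1 1 - T.1 0 1 * T.1 1 0 = 1 := by
    rw [← Matrix.det_fin_two]; exact T.2
  nlinarith [h 0, h 1, sq_nonneg (T.1 0 0 - T.1 1 1), sq_nonneg (T.1 0 1 + T.1 1 0)]

theorem Jhat_Iplus_norm : Jhat Iplus (normSeminorm ℝ E2) = 1 := by
  refine le_antisymm ((Jhat_Iplus_le _ 1).trans (Iplus_le _ fun v hv => ?_))
    (le_ciInf one_le_Iplus_compM_norm)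
  rw [compM_apply, coe_normSeminorm]
  simp [hv]

/-- The Jacobian induced by the Reshetnyak energy is the inscribed Riemannian Jacobian
`π / |L|`; in particular it is normalized on the Euclidean norm. -/
theorem stmt15 :
    (∀ s : Seminorm ℝ E2, IsNorm s → Jhat Iplus s = π / LoewnerArea s) ∧
      Jhat Iplus (normSeminorm ℝ E2) = 1 :=
  ⟨fun _ hs => Jhat_Iplus_eq_div_LoewnerArea hs, Jhat_Iplus_norm⟩
end
end

section
/- For every definition of area μ on 2-dimensional normed planes, the quantity q(μ) = inf over norms s on ℝ² of J^μ(s)/J^i(s) satisfies 1/2 ≤ q(μ) ≤ 1, where J^μ is the Jacobian of μ and J^i is the inscribed Riemannian Jacobian J^i(s) = π/(area of the Loewner ellipse of the unit ball of s). Moreover q(μ^i) = 1. -/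
open Matrix MeasureTheory Real

noncomputable section

/-- `q(μ) = inf_s J^μ(s)/J^i(s)` over norms `s`. -/
def qval (J : Seminorm ℝ E2 → ℝ) : ℝ :=
  sInf {r : ℝ | ∃ s : Seminorm ℝ E2, IsNorm s ∧ r = J s / Ji s}

lemma ellipseIn_iff (s : Seminorm ℝ E2) (M : Matrix (Fin 2) (Fin 2) ℝ) :
    ellipseIn s M ↔ ∀ v : E2, ‖v‖ ≤ 1 → s (Matrix.toEuclideanLin M v) ≤ 1 := by
  simp [ellipseIn, unitBallS, Set.subset_def]

lemma ellipseIn.le_norm {s : Seminorm ℝ E2} {M : Matrix (Fin 2) (Fin 2) ℝ}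
    (h : ellipseIn s M) (v : E2) : compM s M v ≤ ‖v‖ := by
  rw [ellipseIn_iff] at h
  rcases eq_or_ne v 0 with rfl | hv
  · simp
  have hv' : 0 < ‖v‖ := norm_pos_iff.2 hv
  have h1 := h (‖v‖⁻¹ • v) (by rw [norm_smul, norm_inv, norm_norm, inv_mul_cancel₀ hv'.ne'])
  rw [map_smul, map_smul_eq_mul, norm_inv, norm_norm, inv_mul_le_iff₀ hv', mul_one] at h1
  exact h1

lemma ellipseIn_compM (s : Seminorm ℝ E2) (M N : Matrix (Fin 2) (Fin 2) ℝ) :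
    ellipseIn (compM s M) N ↔ ellipseIn s (M * N) := by
  simp [ellipseIn_iff, compM, Matrix.toLpLin_apply]

/-- The pair `(c a / p, c b / q)` lies within the convex hull of the unit disc and the points
`(± 1 / p, 0)`, where `c = 1 / √2` and `(a, b)` is in the unit disc. -/
lemma exists_split_of_sq_add_sq_le_one {p q c a b : ℝ} (hp : 0 < p) (hq : 0 < q) (hc : 0 < c)
    (hpq : p ^ 2 + q ^ 2 = 1) (hc2 : c ^ 2 = 1 / 2) (hpc : p < c) (ha : 0 ≤ a)
    (hab : a ^ 2 + b ^ 2 ≤ 1) :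
    ∃ u : ℝ, 0 ≤ u ∧ u * p + √((c / p * a - u) ^ 2 + (c / q * b) ^ 2) ≤ 1 := by
  have hpc2 : p ^ 2 < 1 / 2 := by nlinarith
  by_cases h : |b| * p ^ 2 ≤ a * q ^ 2
  · refine ⟨c / p * a - c / q * |b| * (p / q), ?_, ?_⟩
    · have : c / p * a - c / q * |b| * (p / q) = c / (p * q ^ 2) * (a * q ^ 2 - |b| * p ^ 2) := by
        field_simp
      rw [this]
      have := sub_nonneg.2 h
      positivity
    · have h1 : (c / p * a - (c / p * a - c / q * |b| * (p / q))) ^ 2 + (c / q * b) ^ 2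
          = (c * |b| / q ^ 2) ^ 2 := by
        rw [mul_pow (c / q) b, ← sq_abs b, show c / p * a - (c / p * a - c / q * |b| * (p / q)) =
          c / q * |b| * (p / q) by ring]
        field_simp
        linear_combination |b| ^ 2 * hpq
      rw [h1, Real.sqrt_sq (by positivity)]
      have h2 : (c / p * a - c / q * |b| * (p / q)) * p + c * |b| / q ^ 2 = c * (a + |b|) := by
        field_simp
        linear_combination (-|b|) * hpq
      rw [h2]
      refine abs_le_one_iff_mul_self_le_one.2 ?_ |> (le_abs_self _).trans
      have := sq_abs b
      nlinarith [sq_nonneg (a - |b|)]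
  · refine ⟨0, le_rfl, ?_⟩
    push Not at h
    rw [zero_mul, zero_add, Real.sqrt_le_one]
    have h1 : (c / p * a - 0) ^ 2 + (c / q * b) ^ 2
        = (a ^ 2 * q ^ 2 + b ^ 2 * p ^ 2) / (2 * p ^ 2 * q ^ 2) := by
      field_simp
      linear_combination (2 * a ^ 2 * q ^ 2 + 2 * b ^ 2 * p ^ 2) * hc2
    rw [h1, div_le_one (by positivity)]
    have h3 : (a * q ^ 2) ^ 2 ≤ (|b| * p ^ 2) ^ 2 := by gcongr
    rw [mul_pow |b|, sq_abs] at h3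
    have h4 : a ^ 2 * q ^ 2 ≤ b ^ 2 * p ^ 2 := by
      have : (b ^ 2 * p ^ 2) * p ^ 2 ≤ (b ^ 2 * p ^ 2) * q ^ 2 := by
        apply mul_le_mul_of_nonneg_left _ (by positivity); linarith
      refine le_of_mul_le_mul_right ?_ (show 0 < q ^ 2 by positivity)
      nlinarith
    have h5 : 0 ≤ (1 - 2 * p ^ 2) * (b ^ 2 * p ^ 2 - a ^ 2 * q ^ 2) :=
      mul_nonneg (by linarith) (by linarith)
    have h6 : p ^ 2 * q ^ 2 * (a ^ 2 + b ^ 2) ≤ p ^ 2 * q ^ 2 * 1 := by gcongr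
    have h7 : q ^ 2 = 1 - p ^ 2 := by linarith
    rw [h7] at h5 h6 ⊢
    nlinarith

/-- If the unit disc is inscribed in the unit ball of `s` and `s` is smaller than `1 / √2` at some
unit vector, then some ellipse of larger area is inscribed. -/
lemma exists_ellipseIn_one_lt_det {s : Seminorm ℝ E2} (hs : ∀ v, s v ≤ ‖v‖) {e : E2}
    (he : ‖e‖ = 1) {p c : ℝ} (hp : 0 < p) (hc : 0 < c) (hc2 : c ^ 2 = 1 / 2) (hpc : p < c)
    (hse : s e ≤ p) : ∃ N : Matrix (Fin 2) (Fin 2) ℝ, ellipseIn s N ∧ 1 < |N.det| := by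
  have hpc2 : p ^ 2 < 1 / 2 := by nlinarith
  obtain ⟨q, hq, hpq⟩ : ∃ q : ℝ, 0 < q ∧ p ^ 2 + q ^ 2 = 1 :=
    ⟨√(1 - p ^ 2), Real.sqrt_pos.2 (by linarith), by rw [Real.sq_sqrt (by linarith)]; ring⟩
  have he2 : e 0 ^ 2 + e 1 ^ 2 = 1 := by
    have := EuclideanSpace.norm_sq_eq e
    simp [he] at this
    exact this.symm
  have hnorm : ∀ x y : ℝ, ‖(x • e + y • !₂[-e 1, e 0] : E2)‖ = √(x ^ 2 + y ^ 2) := by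
    intro x y
    rw [EuclideanSpace.norm_eq]
    congr 1
    simp
    linear_combination (x ^ 2 + y ^ 2) * he2
  have key : ∀ a b : ℝ, 0 ≤ a → a ^ 2 + b ^ 2 ≤ 1 →
      s ((c / p * a) • e + (c / q * b) • !₂[-e 1, e 0]) ≤ 1 := by
    intro a b ha hab
    obtain ⟨u, hu, h⟩ := exists_split_of_sq_add_sq_le_one hp hq hc hpq hc2 hpc ha hab
    have : (c / p * a) • e + (c / q * b) • !₂[-e 1, e 0] =
        u • e + ((c / p * a - u) • e + (c / q * b) • !₂[-e 1, e 0]) := by module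
    rw [this]
    refine (map_add_le_add s _ _).trans (le_trans (add_le_add ?_ ?_) h)
    · rw [map_smul_eq_mul, Real.norm_of_nonneg hu]
      gcongr
    · rw [← hnorm]
      exact hs _
  refine ⟨!![c / p * e 0, -(c / q * e 1); c / p * e 1, c / q * e 0], ?_, ?_⟩
  · rw [ellipseIn_iff]
    intro v hv
    have hv2 : v 0 ^ 2 + v 1 ^ 2 ≤ 1 := by
      have := EuclideanSpace.norm_sq_eq v
      simp at this
      rw [← this]
      exact pow_le_one₀ (norm_nonneg _) hv
    have hM : Matrix.toEuclideanLin !![c / p * e 0, -(c / q * e 1); c / p * e 1, c / q * e 0] v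
        = (c / p * v 0) • e + (c / q * v 1) • !₂[-e 1, e 0] := by
      ext i
      fin_cases i <;> simp [Matrix.toLpLin_apply, dotProduct] <;> ring
    rw [hM]
    rcases le_total 0 (v 0) with h | h
    · exact key _ _ h hv2
    · have := key (-v 0) (-v 1) (by linarith) (by simpa using hv2)
      rw [← map_neg_eq_map] at this
      convert! this using 2
      module
  · rw [Matrix.det_fin_two_of]
    have : c / p * e 0 * (c / q * e 0) - -(c / q * e 1) * (c / p * e 1) = 1 / (2 * p * q) := by
      field_simp
      linear_combination 2 * c ^ 2 * he2 + 2 * hc2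
    rw [this, abs_of_pos (by positivity), one_lt_div (by positivity)]
    have : p ≠ q := by
      rintro rfl
      linarith
    nlinarith [sq_pos_of_ne_zero (sub_ne_zero.2 this)]

/-- John's theorem in the plane. -/
lemma norm_div_sqrt_two_le {s : Seminorm ℝ E2} (hs : ∀ v, s v ≤ ‖v‖)
    (hmax : ∀ M : Matrix (Fin 2) (Fin 2) ℝ, ellipseIn s M → |M.det| ≤ 1) {c : ℝ} (hc : 0 < c)
    (hc2 : c ^ 2 = 1 / 2) (v : E2) : c * ‖v‖ ≤ s v := by
  by_contra! h
  have hv : v ≠ 0 := by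
    rintro rfl
    simp at h
  have hv' : 0 < ‖v‖ := norm_pos_iff.2 hv
  have h1 : s (‖v‖⁻¹ • v) < c := by
    rw [map_smul_eq_mul, norm_inv, norm_norm, inv_mul_lt_iff₀ hv', mul_comm]
    exact h
  have h0 := apply_nonneg s (‖v‖⁻¹ • v)
  obtain ⟨N, hN, hN'⟩ := exists_ellipseIn_one_lt_det (p := (s (‖v‖⁻¹ • v) + c) / 2) hs
    (e := ‖v‖⁻¹ • v) (by rw [norm_smul, norm_inv, norm_norm, inv_mul_cancel₀ hv'.ne'])
    (by linarith) hc hc2 (by linarith) (by linarith)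
  exact absurd (hmax N hN) (not_le.2 hN')

lemma continuous_seminorm_E2 (s : Seminorm ℝ E2) : Continuous s :=
  continuousOn_univ.1 (s.convexOn.continuousOn isOpen_univ)

lemma IsNorm.exists_le {s : Seminorm ℝ E2} (hs : IsNorm s) :
    ∃ c : ℝ, 0 < c ∧ ∀ v, c * ‖v‖ ≤ s v := by
  obtain ⟨w, hw, hmin⟩ := (isCompact_sphere (0 : E2) 1).exists_isMinOn
    (NormedSpace.sphere_nonempty.2 zero_le_one) (continuous_seminorm_E2 s).continuousOn
  refine ⟨s w, hs w (ne_zero_of_mem_unit_sphere ⟨w, hw⟩), fun v => ?_⟩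
  rcases eq_or_ne v 0 with rfl | hv
  · simp
  have hv' : 0 < ‖v‖ := norm_pos_iff.2 hv
  have h1 : s w ≤ s (‖v‖⁻¹ • v) := hmin (by
    simp [norm_smul, inv_mul_cancel₀ hv'.ne'])
  rw [map_smul_eq_mul, norm_inv, norm_norm, le_inv_mul_iff₀ hv', mul_comm] at h1
  exact h1

lemma exists_ellipseIn_det_pos (s : Seminorm ℝ E2) :
    ∃ M : Matrix (Fin 2) (Fin 2) ℝ, ellipseIn s M ∧ 0 < M.det := by
  obtain ⟨C, hC, hsC⟩ := s.bound_of_continuous_normedSpace (continuous_seminorm_E2 s)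
  refine ⟨C⁻¹ • 1, ?_, ?_⟩
  · rw [ellipseIn_iff]
    intro v hv
    have : Matrix.toEuclideanLin (C⁻¹ • (1 : Matrix (Fin 2) (Fin 2) ℝ)) v = C⁻¹ • v := by
      ext i
      simp
    rw [this, map_smul_eq_mul, Real.norm_of_nonneg (by positivity), inv_mul_le_iff₀ hC]
    exact (hsC v).trans (by gcongr)
  · rw [Matrix.det_smul]
    simp
    positivity

lemma isCompact_ellipseIn {s : Seminorm ℝ E2} (hs : IsNorm s) :
    IsCompact {M : Matrix (Fin 2) (Fin 2) ℝ | ellipseIn s M} := by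
  obtain ⟨c, hc, hcs⟩ := hs.exists_le
  have hK : IsCompact (Set.pi Set.univ fun _ : Fin 2 => Set.pi Set.univ fun _ : Fin 2 =>
      Set.Icc (-c⁻¹) c⁻¹) :=
    isCompact_univ_pi fun _ => isCompact_univ_pi fun _ => isCompact_Icc
  refine hK.of_isClosed_subset ?_ ?_
  · simp only [ellipseIn_iff, Set.ofPred_forall]
    refine isClosed_iInter fun v => isClosed_iInter fun _ => isClosed_le ?_ continuous_const
    refine (continuous_seminorm_E2 s).comp ?_
    simp only [Matrix.toLpLin_apply]
    exact (PiLp.continuous_toLp 2 _).comp (continuous_id.matrix_mulVec continuous_const)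
  · rintro (M : Matrix (Fin 2) (Fin 2) ℝ) (hM : ellipseIn s M) i - j -
    have h1 := hM.le_norm (EuclideanSpace.single j 1)
    have h2 := hcs (Matrix.toEuclideanLin M (EuclideanSpace.single j 1))
    have h3 := PiLp.norm_apply_le (Matrix.toEuclideanLin M (EuclideanSpace.single j 1)) i
    have h4 : Matrix.toEuclideanLin M (EuclideanSpace.single j 1) i = M i j := by
      simp [Matrix.toLpLin_apply]
    rw [h4] at h3
    simp [compM] at h1
    have h5 : |M i j| ≤ c⁻¹ := by
      rw [← one_div, le_div_iff₀ hc]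
      calc |M i j| * c ≤ ‖Matrix.toEuclideanLin M (EuclideanSpace.single j 1)‖ * c := by gcongr; exact h3
        _ ≤ 1 := by linarith
    exact abs_le.1 h5

lemma exists_isMax_ellipseIn {s : Seminorm ℝ E2} (hs : IsNorm s) :
    ∃ M : Matrix (Fin 2) (Fin 2) ℝ, ellipseIn s M ∧ 0 < M.det ∧
      ∀ N : Matrix (Fin 2) (Fin 2) ℝ, ellipseIn s N → |N.det| ≤ M.det := by
  obtain ⟨N, hN, hN0⟩ := exists_ellipseIn_det_pos s
  obtain ⟨M, hM, hmax⟩ := (isCompact_ellipseIn hs).exists_isMaxOn ⟨N, hN⟩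
    (f := fun M => |M.det|) (continuous_id.matrix_det.abs).continuousOn
  have hM0 : 0 < |M.det| := lt_of_lt_of_le (abs_pos.2 hN0.ne') (hmax hN)
  rcases lt_or_gt_of_ne (abs_pos.1 hM0) with h | h
  · refine ⟨M * !![1, 0; 0, -1], ?_, ?_, fun N hN => ?_⟩
    · rw [← ellipseIn_compM, ellipseIn_iff]
      intro v hv
      refine (ellipseIn.le_norm hM _).trans (le_trans (le_of_eq ?_) hv)
      rw [EuclideanSpace.norm_eq, EuclideanSpace.norm_eq]
      simp [Matrix.toLpLin_apply, dotProduct]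
    · simpa using h
    · have := hmax hN
      simpa [abs_of_neg h] using this
  · exact ⟨M, hM, h, fun N hN => by simpa [abs_of_pos h] using hmax hN⟩

lemma Ji_eq_inv_det {s : Seminorm ℝ E2} {M : Matrix (Fin 2) (Fin 2) ℝ} (hM : ellipseIn s M)
    (hM0 : 0 < M.det) (hmax : ∀ N : Matrix (Fin 2) (Fin 2) ℝ, ellipseIn s N → |N.det| ≤ M.det) :
    Ji s = M.det⁻¹ := by
  have : LoewnerArea s = π * M.det := by
    refine IsGreatest.csSup_eq ⟨⟨M, hM, by rw [abs_of_pos hM0]⟩, ?_⟩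
    rintro _ ⟨N, hN, rfl⟩
    have := hmax N hN
    gcongr
  rw [Ji, this]
  field_simp

lemma IsJacobian.compM_eq {J : Seminorm ℝ E2 → ℝ} (hJ : IsJacobian J) (s : Seminorm ℝ E2)
    {M : Matrix (Fin 2) (Fin 2) ℝ} (hM : 0 < M.det) : J (compM s M) = M.det * J s := by
  obtain ⟨-, -, hH, hS, -⟩ := hJ
  obtain ⟨d, hd0, hd2⟩ : ∃ d : NNReal, 0 < (d : ℝ) ∧ (d : ℝ) ^ 2 = M.det :=
    ⟨⟨√M.det, Real.sqrt_nonneg _⟩, Real.sqrt_pos.2 hM, Real.sq_sqrt hM.le⟩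
  have hT : ((d : ℝ)⁻¹ • M).det = 1 := by
    rw [Matrix.det_smul, Fintype.card_fin, ← hd2, inv_pow, inv_mul_cancel₀ (by positivity)]
  have h1 : compM s M = d • compM s ((⟨(d : ℝ)⁻¹ • M, hT⟩ : SL2) : Matrix (Fin 2) (Fin 2) ℝ) := by
    ext v
    simp only [compM, Seminorm.comp_apply, _root_.smul_apply, map_smul, LinearMap.smul_apply,
      map_smul_eq_mul, NNReal.smul_def, smul_eq_mul]
    rw [Real.norm_of_nonneg (by positivity)]
    simp [hd0.ne']
  rw [h1, hH, hS s ⟨_, hT⟩, hd2]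

lemma IsJacobian.div_Ji_mem_Icc {J : Seminorm ℝ E2 → ℝ} (hJ : IsJacobian J) {s : Seminorm ℝ E2}
    (hs : IsNorm s) : J s / Ji s ∈ Set.Icc (1 / 2) 1 := by
  obtain ⟨M, hM, hM0, hmax⟩ := exists_isMax_ellipseIn hs
  have h1 : J s / Ji s = J (compM s M) := by
    rw [hJ.compM_eq s hM0, Ji_eq_inv_det hM hM0 hmax, div_inv_eq_mul, mul_comm]
  have hmax' : ∀ N : Matrix (Fin 2) (Fin 2) ℝ, ellipseIn (compM s M) N → |N.det| ≤ 1 := by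
    intro N hN
    have := hmax _ ((ellipseIn_compM s M N).1 hN)
    rw [Matrix.det_mul, abs_mul, abs_of_pos hM0] at this
    exact le_of_mul_le_mul_left (by linarith) hM0
  obtain ⟨-, hmono, hH, -, hone⟩ := hJ
  rw [h1]
  constructor
  · obtain ⟨c, hc, hc2⟩ : ∃ c : NNReal, 0 < (c : ℝ) ∧ (c : ℝ) ^ 2 = 1 / 2 :=
      ⟨⟨√(1 / 2), Real.sqrt_nonneg _⟩, Real.sqrt_pos.2 (by norm_num),
        Real.sq_sqrt (by norm_num)⟩
    have h2 : c • normSeminorm ℝ E2 ≤ compM s M := fun v =>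
      norm_div_sqrt_two_le hM.le_norm hmax' hc hc2 v
    have h3 := hmono _ _ h2
    rw [hH, hone, mul_one] at h3
    exact hc2 ▸ h3
  · exact hone ▸ hmono (normSeminorm ℝ E2) (compM s M) fun v => hM.le_norm v

lemma Ji_pos {s : Seminorm ℝ E2} (hs : IsNorm s) : 0 < Ji s := by
  obtain ⟨M, hM, hM0, hmax⟩ := exists_isMax_ellipseIn hs
  rw [Ji_eq_inv_det hM hM0 hmax]
  positivity

lemma isNorm_normSeminorm : IsNorm (normSeminorm ℝ E2) := fun _ hv => norm_pos_iff.2 hv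

/-- For every Jacobian `J^μ`, `1/2 ≤ q(μ) ≤ 1`, and `q(μ^i) = 1`. -/
theorem stmt18 :
    (∀ J : Seminorm ℝ E2 → ℝ, IsJacobian J → 1 / 2 ≤ qval J ∧ qval J ≤ 1) ∧ qval Ji = 1 := by
  refine ⟨fun J hJ => ⟨?_, ?_⟩, ?_⟩ <;> unfold qval
  · refine le_csInf ⟨_, normSeminorm ℝ E2, isNorm_normSeminorm, rfl⟩ ?_
    rintro _ ⟨s, hs, rfl⟩
    exact (hJ.div_Ji_mem_Icc hs).1
  · refine le_trans (csInf_le ⟨1 / 2, ?_⟩ ?_) (hJ.div_Ji_mem_Icc isNorm_normSeminorm).2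
    swap
    · exact ⟨normSeminorm ℝ E2, isNorm_normSeminorm, rfl⟩
    rintro _ ⟨s, hs, rfl⟩
    exact (hJ.div_Ji_mem_Icc hs).1
  · have : {r : ℝ | ∃ s : Seminorm ℝ E2, IsNorm s ∧ r = Ji s / Ji s} = {1} := by
      ext r
      constructor
      · rintro ⟨s, hs, rfl⟩
        exact div_self (Ji_pos hs).ne'
      · rintro rfl
        exact ⟨_, isNorm_normSeminorm, (div_self (Ji_pos isNorm_normSeminorm).ne').symm⟩
    rw [this, csInf_singleton]
end
end
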